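/- The following limits hold: lim_{φ→0⁺} φ·(φψ'(φ) − 1) = 1 and lim_{φ→∞} φ·(φψ'(φ) − 1) = 1/2; consequently lim_{φ→0⁺} √φ · √(φψ'(φ) − 1) = 1 and lim_{φ→∞} √φ · √(φψ'(φ) − 1) = 1/√2. -/

import Mathlib

/-!
The proof rests on the series `ψ'(x) = ∑ₖ 1 / (x + k)²` for `x > 0`.

Convexity of `log Γ` together with `log Γ(x + 1) - log Γ(x) = log x` squeezes `ψ(x)` between
`log x - 1 / x` and `log x`, so `ψ(x) - log x → 0` at infinity. Iterating `ψ(x + 1) = ψ(x) + 1 / x`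
then gives `ψ(x) - ψ(1) = ∑ₖ (1 / (1 + k) - 1 / (x + k))`, which may be differentiated termwise.

Comparing the terms `1 / x²` with the telescoping differences of `g(x) = 1 / x + 1 / (2 x²)` and
of `g(x) + 1 / (6 x³)` yields `g(x) ≤ ψ'(x) ≤ g(x) + 1 / (6 x³)`, hence the limit at infinity.
At `0` the term `1 / x²` dominates: `x² ψ'(x) = 1 + x² ψ'(x + 1)`, with `ψ'(x + 1)` bounded.
-/

open Real Filter Topology

/-- The digamma function `ψ(x) = d/dx log Γ(x)`. -/
noncomputable def digamma (x : ℝ) : ℝ := deriv (fun t => Real.log (Real.Gamma t)) x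

/-- The trigamma function `ψ'(x)`, the derivative of the digamma function. -/
noncomputable def trigamma (x : ℝ) : ℝ := deriv digamma x

lemma differentiableAt_log_Gamma {x : ℝ} (hx : 0 < x) :
    DifferentiableAt ℝ (fun t => Real.log (Real.Gamma t)) x := by
  refine (Real.differentiableAt_Gamma fun m h => ?_).log (Real.Gamma_pos_of_pos hx).ne'
  have : (0 : ℝ) ≤ m := m.cast_nonneg
  linarith

lemma log_Gamma_add_one {x : ℝ} (hx : 0 < x) :
    Real.log (Real.Gamma (x + 1)) = Real.log (Real.Gamma x) + Real.log x := by
  rw [Real.Gamma_add_one hx.ne', Real.log_mul hx.ne' (Real.Gamma_pos_of_pos hx).ne', add_comm]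

lemma digamma_add_one {x : ℝ} (hx : 0 < x) : digamma (x + 1) = digamma x + 1 / x := by
  have h1 : HasDerivAt (fun t => Real.log (Real.Gamma (t + 1))) (digamma (x + 1)) x :=
    (differentiableAt_log_Gamma (by linarith : 0 < x + 1)).hasDerivAt.comp_add_const x 1
  have h2 : HasDerivAt (fun t => Real.log (Real.Gamma t) + Real.log t) (digamma x + x⁻¹) x :=
    (differentiableAt_log_Gamma hx).hasDerivAt.add (Real.hasDerivAt_log hx.ne')
  rw [one_div]
  refine h1.unique (h2.congr_of_eventuallyEq ?_)
  filter_upwards [lt_mem_nhds hx] with t ht using log_Gamma_add_one ht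

lemma digamma_add_nat {x : ℝ} (hx : 0 < x) (n : ℕ) :
    digamma (x + n) = digamma x + ∑ k ∈ Finset.range n, 1 / (x + k) := by
  induction n with
  | zero => simp
  | succ n ih =>
    rw [Finset.sum_range_succ, Nat.cast_succ, ← add_assoc, digamma_add_one (by positivity), ih,
      add_assoc]

/-- The slope of the convex function `log Γ` over `[x, x + 1]` is `log x`, and it is at least the
derivative at the left endpoint. -/
lemma digamma_le_log {x : ℝ} (hx : 0 < x) : digamma x ≤ Real.log x := by
  have h := Real.convexOn_log_Gamma.deriv_le_slope (x := x) (y := x + 1) hx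
    (by simp; linarith) (by linarith) (differentiableAt_log_Gamma hx)
  change digamma x ≤ _ at h
  simpa [slope_def_field, log_Gamma_add_one hx] using h

/-- The slope of `log Γ` over `[x, x + 1]` is also at most `ψ(x + 1) = ψ(x) + 1 / x`. -/
lemma log_sub_le_digamma {x : ℝ} (hx : 0 < x) : Real.log x - 1 / x ≤ digamma x := by
  have hx1 : 0 < x + 1 := by linarith
  have h := Real.convexOn_log_Gamma.slope_le_deriv (x := x) (y := x + 1) hx
    hx1 (by linarith) (differentiableAt_log_Gamma hx1)
  change _ ≤ digamma (x + 1) at h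
  have h' : Real.log x ≤ digamma (x + 1) := by
    simpa [slope_def_field, log_Gamma_add_one hx] using h
  rw [digamma_add_one hx] at h'
  linarith

lemma tendsto_digamma_sub_log : Tendsto (fun x => digamma x - Real.log x) atTop (𝓝 0) := by
  have h0 : Tendsto (fun x : ℝ => -(1 / x)) atTop (𝓝 0) := by
    simpa using (tendsto_inv_atTop_zero (𝕜 := ℝ)).neg
  refine tendsto_of_tendsto_of_tendsto_of_le_of_le' h0 tendsto_const_nhds ?_ ?_
  · filter_upwards [eventually_gt_atTop 0] with x hx
    linarith [log_sub_le_digamma hx]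
  · filter_upwards [eventually_gt_atTop 0] with x hx
    linarith [digamma_le_log hx]

lemma tendsto_digamma_add_nat_sub_log (x : ℝ) :
    Tendsto (fun n : ℕ => digamma (x + n) - Real.log n) atTop (𝓝 0) := by
  have h1 := tendsto_digamma_sub_log.comp
    (tendsto_atTop_add_const_left _ x (tendsto_natCast_atTop_atTop (R := ℝ)))
  have h2 := (Real.tendsto_log_comp_add_sub_log x).comp (tendsto_natCast_atTop_atTop (R := ℝ))
  have h3 := h1.add h2
  rw [add_zero] at h3
  refine h3.congr fun n => ?_
  simp only [Function.comp_apply, add_comm x]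
  ring

lemma tendsto_sum_digamma {x : ℝ} (hx : 0 < x) :
    Tendsto (fun n : ℕ => ∑ k ∈ Finset.range n, (1 / (1 + (k : ℝ)) - 1 / (x + k))) atTop
      (𝓝 (digamma x - digamma 1)) := by
  have h := ((tendsto_digamma_add_nat_sub_log 1).sub
    (tendsto_digamma_add_nat_sub_log x)).add_const (digamma x - digamma 1)
  rw [sub_zero, zero_add] at h
  refine h.congr fun n => ?_
  rw [digamma_add_nat hx, digamma_add_nat one_pos, Finset.sum_sub_distrib]
  ring

lemma summable_one_div_add_sq {a : ℝ} (ha : 0 < a) :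
    Summable fun k : ℕ => 1 / (a + (k : ℝ)) ^ 2 := by
  refine ((Real.summable_one_div_nat_add_rpow a 2).2 one_lt_two).congr fun k => ?_
  rw [abs_of_pos (by positivity), add_comm, Real.rpow_two]

lemma hasSum_trigamma {x : ℝ} (hx : 0 < x) :
    HasSum (fun k : ℕ => 1 / (x + (k : ℝ)) ^ 2) (trigamma x) := by
  -- `(a, ∞)` contains both `x` and the point `1`, where every term of the series for `ψ` vanishes.
  obtain ⟨a, ha, ham⟩ := exists_between (lt_min hx one_pos)
  obtain ⟨hax, ha1⟩ := lt_min_iff.1 ham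
  have hd : ∀ (k : ℕ) (y : ℝ), y ∈ Set.Ioi a →
      HasDerivAt (fun z : ℝ => 1 / (1 + (k : ℝ)) - 1 / (z + k)) (1 / (y + (k : ℝ)) ^ 2) y := by
    intro k y hy
    have hy' : 0 < y := ha.trans hy
    have h := (((hasDerivAt_id y).add_const (k : ℝ)).inv
      (by simp only [id]; positivity)).const_sub (1 / (1 + (k : ℝ)))
    simpa [neg_div] using h
  have hb : ∀ (k : ℕ) (y : ℝ), y ∈ Set.Ioi a →
      ‖1 / (y + (k : ℝ)) ^ 2‖ ≤ 1 / (a + (k : ℝ)) ^ 2 := by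
    intro k y hy
    have hy' : a < y := hy
    rw [Real.norm_of_nonneg (by positivity)]
    gcongr
  have h1 : Summable fun k : ℕ => 1 / (1 + (k : ℝ)) - 1 / ((1 : ℝ) + k) := by
    simp only [sub_self, summable_zero]
  have hs := fun (y : ℝ) (hy : y ∈ Set.Ioi a) =>
    summable_of_summable_hasDerivAt_of_isPreconnected (summable_one_div_add_sq ha) isOpen_Ioi
      isPreconnected_Ioi hd hb (y₀ := 1) ha1 h1 hy
  have hD := hasDerivAt_tsum_of_isPreconnected (summable_one_div_add_sq ha) isOpen_Ioi
      isPreconnected_Ioi hd hb (y₀ := 1) ha1 h1 hax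
  have he : (fun z => (∑' k : ℕ, (1 / (1 + (k : ℝ)) - 1 / (z + k))) + digamma 1) =ᶠ[𝓝 x]
      digamma := by
    filter_upwards [lt_mem_nhds hax] with z hz
    rw [tendsto_nhds_unique (hs z hz).hasSum.tendsto_sum_nat (tendsto_sum_digamma (ha.trans hz))]
    ring
  have ht : trigamma x = ∑' k : ℕ, 1 / (x + (k : ℝ)) ^ 2 :=
    ((hD.add_const (digamma 1)).congr_of_eventuallyEq he.symm).deriv
  rw [ht]
  exact (summable_one_div_add_sq hx).hasSum

lemma trigamma_eq {x : ℝ} (hx : 0 < x) : trigamma x = 1 / x ^ 2 + trigamma (x + 1) := by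
  have h := (hasSum_nat_add_iff' 1).2 (hasSum_trigamma hx)
  have h' := hasSum_trigamma (x := x + 1) (by linarith)
  simp only [Nat.cast_add, Nat.cast_one, Finset.sum_range_one, Nat.cast_zero, add_zero] at h
  simp only [add_assoc, add_comm (1 : ℝ)] at h'
  linarith [h.unique h']

lemma tendsto_telescope {g : ℝ → ℝ} (hg : Tendsto g atTop (𝓝 0)) (x : ℝ) :
    Tendsto (fun n : ℕ => ∑ k ∈ Finset.range n, (g (x + k) - g (x + k + 1))) atTop
      (𝓝 (g x)) := by
  have h := (hg.comp (tendsto_atTop_add_const_left _ x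
    (tendsto_natCast_atTop_atTop (R := ℝ)))).const_sub (g x)
  rw [sub_zero] at h
  refine h.congr fun n => ?_
  have := Finset.sum_range_sub' (fun k : ℕ => g (x + k)) n
  simp only [Nat.cast_zero, add_zero, Nat.cast_succ, ← add_assoc] at this
  exact this.symm

/-- With `g(y) = 1 / y + 1 / (2 y²)`, one has
`1 / y² - (g(y) - g(y + 1)) = 1 / (2 y² (y + 1)²) > 0`. -/
lemma le_trigamma {x : ℝ} (hx : 0 < x) : 1 / x + 1 / (2 * x ^ 2) ≤ trigamma x := by
  have hg : Tendsto (fun y : ℝ => 1 / y + 1 / (2 * y ^ 2)) atTop (𝓝 0) := by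
    have h := tendsto_inv_atTop_zero (𝕜 := ℝ)
    have h2 := h.add ((h.pow 2).const_mul (1 / 2))
    norm_num at h2
    simpa [mul_comm] using h2
  refine le_of_tendsto_of_tendsto' (tendsto_telescope hg x) (hasSum_trigamma hx).tendsto_sum_nat
    fun n => Finset.sum_le_sum fun k _ => ?_
  have hy : 0 < x + k := by positivity
  generalize x + (k : ℝ) = y at hy
  have : 1 / y ^ 2 - (1 / y + 1 / (2 * y ^ 2) - (1 / (y + 1) + 1 / (2 * (y + 1) ^ 2)))
      = 1 / (2 * y ^ 2 * (y + 1) ^ 2) := by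
    field_simp
    ring
  have : 0 < 1 / (2 * y ^ 2 * (y + 1) ^ 2) := by positivity
  linarith

/-- With `g(y) = 1 / y + 1 / (2 y²) + 1 / (6 y³)`, one has
`g(y) - g(y + 1) - 1 / y² = 1 / (6 y³ (y + 1)³) > 0`. -/
lemma trigamma_le {x : ℝ} (hx : 0 < x) :
    trigamma x ≤ 1 / x + 1 / (2 * x ^ 2) + 1 / (6 * x ^ 3) := by
  have hg : Tendsto (fun y : ℝ => 1 / y + 1 / (2 * y ^ 2) + 1 / (6 * y ^ 3)) atTop (𝓝 0) := by
    have h := tendsto_inv_atTop_zero (𝕜 := ℝ)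
    have h2 := (h.add ((h.pow 2).const_mul (1 / 2))).add ((h.pow 3).const_mul (1 / 6))
    norm_num at h2
    simpa [mul_comm] using h2
  refine le_of_tendsto_of_tendsto' (hasSum_trigamma hx).tendsto_sum_nat (tendsto_telescope hg x)
    fun n => Finset.sum_le_sum fun k _ => ?_
  have hy : 0 < x + k := by positivity
  generalize x + (k : ℝ) = y at hy
  have : (1 / y + 1 / (2 * y ^ 2) + 1 / (6 * y ^ 3) -
      (1 / (y + 1) + 1 / (2 * (y + 1) ^ 2) + 1 / (6 * (y + 1) ^ 3))) - 1 / y ^ 2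
      = 1 / (6 * y ^ 3 * (y + 1) ^ 3) := by
    field_simp
    ring
  have : 0 < 1 / (6 * y ^ 3 * (y + 1) ^ 3) := by positivity
  linarith

lemma tendsto_mul_trigamma_zero :
    Tendsto (fun φ : ℝ => φ * (φ * trigamma φ - 1)) (𝓝[>] (0:ℝ)) (𝓝 1) := by
  have hid : Tendsto (fun φ : ℝ => φ) (𝓝[>] (0:ℝ)) (𝓝 0) := tendsto_id.mono_left nhdsWithin_le_nhds
  have hl : Tendsto (fun φ : ℝ => 1 - φ) (𝓝[>] (0:ℝ)) (𝓝 1) := by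
    simpa using hid.const_sub 1
  have hu : Tendsto (fun φ : ℝ => 1 + 2 * φ ^ 2 - φ) (𝓝[>] (0:ℝ)) (𝓝 1) := by
    simpa using (((hid.pow 2).const_mul 2).const_add 1).sub hid
  have key : ∀ φ : ℝ, 0 < φ →
      φ * (φ * trigamma φ - 1) = 1 + φ ^ 2 * trigamma (φ + 1) - φ := by
    intro φ hφ
    rw [trigamma_eq hφ]
    field_simp
  refine tendsto_of_tendsto_of_tendsto_of_le_of_le' hl hu ?_ ?_
  · filter_upwards [self_mem_nhdsWithin] with φ hφ
    have hφ : 0 < φ := hφ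
    rw [key φ hφ]
    have h := le_trigamma (x := φ + 1) (by linarith)
    have : 0 ≤ trigamma (φ + 1) := le_trans (by positivity) h
    have : 0 ≤ φ ^ 2 * trigamma (φ + 1) := by positivity
    linarith
  · filter_upwards [self_mem_nhdsWithin] with φ hφ
    have hφ : 0 < φ := hφ
    rw [key φ hφ]
    have h : trigamma (φ + 1) ≤ 2 := by
      refine (trigamma_le (x := φ + 1) (by linarith)).trans ?_
      have h1 : 1 ≤ φ + 1 := by linarith
      have e1 : 1 / (φ + 1) ≤ 1 := (div_le_one (by linarith)).2 h1
      have e2 : 1 / (2 * (φ + 1) ^ 2) ≤ 1 / 2 :=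
        one_div_le_one_div_of_le two_pos (by linarith [one_le_pow₀ h1 (n := 2)])
      have e3 : 1 / (6 * (φ + 1) ^ 3) ≤ 1 / 2 :=
        one_div_le_one_div_of_le two_pos (by linarith [one_le_pow₀ h1 (n := 3)])
      linarith
    nlinarith [mul_le_mul_of_nonneg_left h (sq_nonneg φ)]

lemma tendsto_mul_trigamma_atTop :
    Tendsto (fun φ : ℝ => φ * (φ * trigamma φ - 1)) atTop (𝓝 (1 / 2)) := by
  have hu : Tendsto (fun φ : ℝ => 1 / 2 + 1 / 6 * φ⁻¹) atTop (𝓝 (1 / 2)) := by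
    simpa only [mul_zero, add_zero] using
      ((tendsto_inv_atTop_zero (𝕜 := ℝ)).const_mul (1 / 6)).const_add (1 / 2)
  refine tendsto_of_tendsto_of_tendsto_of_le_of_le' tendsto_const_nhds hu ?_ ?_
  · filter_upwards [eventually_gt_atTop 0] with φ hφ
    calc (1 / 2 : ℝ) = φ * (φ * (1 / φ + 1 / (2 * φ ^ 2)) - 1) := by field_simp; ring
      _ ≤ φ * (φ * trigamma φ - 1) := by gcongr; exact le_trigamma hφ
  · filter_upwards [eventually_gt_atTop 0] with φ hφ
    calc φ * (φ * trigamma φ - 1)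
        ≤ φ * (φ * (1 / φ + 1 / (2 * φ ^ 2) + 1 / (6 * φ ^ 3)) - 1) := by
          gcongr; exact trigamma_le hφ
      _ = 1 / 2 + 1 / 6 * φ⁻¹ := by field_simp; ring

/-- `lim_{φ→0⁺} φ(φψ'(φ) − 1) = 1`, `lim_{φ→∞} φ(φψ'(φ) − 1) = 1/2`,
and consequently `lim_{φ→0⁺} √φ·√(φψ'(φ) − 1) = 1` and
`lim_{φ→∞} √φ·√(φψ'(φ) − 1) = 1/√2`. -/
theorem trigamma_asymptotics :
    Filter.Tendsto (fun φ : ℝ => φ * (φ * trigamma φ - 1)) (𝓝[>] (0:ℝ)) (𝓝 1) ∧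
    Filter.Tendsto (fun φ : ℝ => φ * (φ * trigamma φ - 1)) Filter.atTop (𝓝 (1/2)) ∧
    Filter.Tendsto (fun φ : ℝ => Real.sqrt φ * Real.sqrt (φ * trigamma φ - 1))
      (𝓝[>] (0:ℝ)) (𝓝 1) ∧
    Filter.Tendsto (fun φ : ℝ => Real.sqrt φ * Real.sqrt (φ * trigamma φ - 1))
      Filter.atTop (𝓝 (1 / Real.sqrt 2)) := by
  have hsqrt : ∀ {l : Filter ℝ} {c : ℝ}, (∀ᶠ φ in l, 0 < φ) →
      Tendsto (fun φ : ℝ => φ * (φ * trigamma φ - 1)) l (𝓝 c) →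
      Tendsto (fun φ : ℝ => Real.sqrt φ * Real.sqrt (φ * trigamma φ - 1)) l (𝓝 (Real.sqrt c)) :=
    fun hl h => h.sqrt.congr' (hl.mono fun φ hφ => Real.sqrt_mul hφ.le _)
  refine ⟨tendsto_mul_trigamma_zero, tendsto_mul_trigamma_atTop, ?_, ?_⟩
  · simpa using hsqrt (l := 𝓝[>] (0:ℝ)) self_mem_nhdsWithin tendsto_mul_trigamma_zero
  · simpa using hsqrt (eventually_gt_atTop 0) tendsto_mul_trigamma_atTop
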